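/- (q-Pfaff–Saalschütz summation) Let q, a, b, c be complex numbers and n a nonnegative integer such that all denominator factors below are nonzero. Then ∑_{k=0}^{n} ((a;q)_k (b;q)_k (q^{-n};q)_k / ((q;q)_k (c;q)_k (a b c^{-1} q^{1-n};q)_k)) q^k = ((c/a;q)_n (c/b;q)_n) / ((c;q)_n (c/(ab);q)_n). -/

import Mathlib

/-- The finite q-shifted factorial `(a;q)_n = ∏_{k=0}^{n-1} (1 - a q^k)`. -/
noncomputable def qPoch (a q : ℂ) (n : ℕ) : ℂ := ∏ k ∈ Finset.range n, (1 - a * q ^ k)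

/-!
Put `d = c / (a b)`, so `c = a b d`. Reversing the order of the factors in `(q^{-n}; q)_k` and
`(d⁻¹ q^{1-n}; q)_k` and multiplying through by `(c; q)_n (d; q)_n` turns the summation into the
polynomial identity
`∑_{i+j=n} [i+j, i]_q (a)_i (b)_i d^i (d)_j (a b d q^i)_j = (a d)_n (b d)_n`,
which is proved by induction on `n`. With `x = q^i` and `y = q^j`, the new factor
`(1 - a d x y) (1 - b d x y)` is `(1 - d y) (1 - a b d x² y) + d y (1 - a x) (1 - b x)`; the two
pieces of the `(i, j)` term go to `(i, j + 1)` and `(i + 1, j)`, where they recombine by the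
two `q`-Pascal rules.
-/

section

open Finset

lemma sum_antidiagonal_succ_of_pascal {M : Type*} [AddCommMonoid M] {f g h : ℕ → ℕ → M}
    (hleft : ∀ j, f 0 (j + 1) = g 0 j) (hright : ∀ i, f (i + 1) 0 = h i 0)
    (hmid : ∀ i j, f (i + 1) (j + 1) = g (i + 1) j + h i (j + 1)) (n : ℕ) :
    ∑ p ∈ antidiagonal (n + 1), f p.1 p.2 = ∑ p ∈ antidiagonal n, (g p.1 p.2 + h p.1 p.2) := by
  rw [sum_add_distrib]
  cases n with
  | zero => simp [Nat.antidiagonal_succ, hleft, hright]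
  | succ n =>
    rw [Nat.sum_antidiagonal_succ, Nat.sum_antidiagonal_succ', Nat.sum_antidiagonal_succ,
      Nat.sum_antidiagonal_succ' (f := fun p ↦ h p.1 p.2)]
    simp only [hleft, hright, hmid, sum_add_distrib]
    abel

section CommRing

variable {R : Type*} [CommRing R]

/-- The `q`-shifted factorial `(a; q)_n` over an arbitrary commutative ring; `qPoch` is the
case of `ℂ`. -/
def qPochhammer (a q : R) (n : ℕ) : R := ∏ k ∈ range n, (1 - a * q ^ k)

@[simp]
lemma qPochhammer_zero (a q : R) : qPochhammer a q 0 = 1 := prod_range_zero _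

lemma qPochhammer_succ (a q : R) (n : ℕ) :
    qPochhammer a q (n + 1) = qPochhammer a q n * (1 - a * q ^ n) :=
  prod_range_succ _ n

lemma qPochhammer_add (a q : R) (m n : ℕ) :
    qPochhammer a q (m + n) = qPochhammer a q m * qPochhammer (a * q ^ m) q n := by
  simp only [qPochhammer, prod_range_add, pow_add, mul_assoc]

lemma qPochhammer_succ_left (a q : R) (n : ℕ) :
    qPochhammer a q (n + 1) = (1 - a) * qPochhammer (a * q) q n := by
  simp only [add_comm n, qPochhammer_add a q 1 n, qPochhammer_succ, qPochhammer_zero, pow_zero,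
    pow_one, one_mul, mul_one]

/-- The Gaussian binomial coefficient `[i + j, i]_q`, indexed by the two parts `i` and `j` so that
no subtraction of natural numbers occurs. -/
def qBinom (q : R) : ℕ → ℕ → R
  | 0, _ => 1
  | _ + 1, 0 => 1
  | i + 1, j + 1 => qBinom q i (j + 1) + q ^ (i + 1) * qBinom q (i + 1) j

@[simp]
lemma qBinom_zero_left (q : R) (j : ℕ) : qBinom q 0 j = 1 := by rw [qBinom]

@[simp]
lemma qBinom_zero_right (q : R) (i : ℕ) : qBinom q i 0 = 1 := by cases i <;> rw [qBinom]

lemma qBinom_succ_succ (q : R) (i j : ℕ) :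
    qBinom q (i + 1) (j + 1) = qBinom q i (j + 1) + q ^ (i + 1) * qBinom q (i + 1) j := by
  rw [qBinom]

lemma qBinom_succ_succ' (q : R) (i j : ℕ) :
    qBinom q (i + 1) (j + 1) = q ^ (j + 1) * qBinom q i (j + 1) + qBinom q (i + 1) j := by
  induction i generalizing j with
  | zero =>
    induction j with
    | zero => simp [qBinom_succ_succ, add_comm]
    | succ j ihj =>
      have pascal := qBinom_succ_succ q 0
      simp only [qBinom_zero_left] at pascal ihj ⊢
      linear_combination pascal (j + 1) + q * ihj - pascal j
  | succ i ihi =>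
    induction j with
    | zero =>
      have pascal (i : ℕ) := qBinom_succ_succ q i 0
      have ihi := ihi 0
      simp only [qBinom_zero_right] at pascal ihi ⊢
      linear_combination pascal (i + 1) + ihi - q * pascal i
    | succ j ihj =>
      linear_combination qBinom_succ_succ q (i + 1) (j + 1) + ihi (j + 1) + q ^ (i + 2) * ihj
        - q ^ (j + 2) * qBinom_succ_succ q i (j + 1) - qBinom_succ_succ q (i + 1) j

lemma qBinom_succ_succ_mul_one_sub (q u : R) (i j : ℕ) :
    qBinom q (i + 1) (j + 1) * (1 - u * q ^ (i + j + 1)) =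
      qBinom q (i + 1) j * (1 - u * q ^ (2 * (i + 1) + j)) +
        q ^ (j + 1) * qBinom q i (j + 1) * (1 - u * q ^ i) := by
  linear_combination qBinom_succ_succ' q i j - u * q ^ (i + j + 1) * qBinom_succ_succ q i j

lemma qBinom_mul_qPochhammer (q : R) (i j : ℕ) :
    qBinom q i j * (qPochhammer q q i * qPochhammer q q j) = qPochhammer q q (i + j) := by
  induction i generalizing j with
  | zero => simp
  | succ i ihi =>
    induction j with
    | zero => simp
    | succ j ihj =>
      have hi := ihi (j + 1)
      rw [show i + (j + 1) = i + j + 1 by ring] at hi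
      rw [show i + 1 + j = i + j + 1 by ring] at ihj
      rw [show i + 1 + (j + 1) = i + j + 1 + 1 by ring, qBinom_succ_succ,
        qPochhammer_succ q q (i + j + 1)]
      calc
        _ = (1 - q * q ^ i) * (qBinom q i (j + 1) * (qPochhammer q q i * qPochhammer q q (j + 1)))
            + q ^ (i + 1) * (1 - q * q ^ j) *
              (qBinom q (i + 1) j * (qPochhammer q q (i + 1) * qPochhammer q q j)) := by
          rw [qPochhammer_succ q q i, qPochhammer_succ q q j]; ring
        _ = _ := by rw [hi, ihj]; ring

/-- The term of the `q`-Pfaff–Saalschütz sum with `k = i` and `n = i + j`, cleared of denominators;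
here `d` stands for `c / (a b)`. -/
def saalschutzTerm (q a b d : R) (i j : ℕ) : R :=
  qBinom q i j * (qPochhammer a q i * qPochhammer b q i * d ^ i * qPochhammer d q j *
    qPochhammer (a * b * d * q ^ i) q j)

lemma sum_antidiagonal_succ_saalschutzTerm (q a b d : R) (n : ℕ) :
    ∑ p ∈ antidiagonal (n + 1), saalschutzTerm q a b d p.1 p.2 =
      (∑ p ∈ antidiagonal n, saalschutzTerm q a b d p.1 p.2) *
        ((1 - a * d * q ^ n) * (1 - b * d * q ^ n)) := by
  let toRight (i j : ℕ) : R := qBinom q i j * (qPochhammer a q i * qPochhammer b q i * d ^ i *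
    qPochhammer d q (j + 1) * qPochhammer (a * b * d * q ^ i) q j) *
      (1 - a * b * d * q ^ (2 * i + j))
  let toLeft (i j : ℕ) : R := q ^ j * qBinom q i j * (qPochhammer a q (i + 1) *
    qPochhammer b q (i + 1) * d ^ (i + 1) * qPochhammer d q j *
      qPochhammer (a * b * d * q ^ i) q j)
  rw [sum_antidiagonal_succ_of_pascal (g := toRight) (h := toLeft), sum_mul]
  · refine sum_congr rfl fun ⟨i, j⟩ hij ↦ ?_
    rw [← mem_antidiagonal.mp hij]
    simp only [toRight, toLeft, saalschutzTerm, qPochhammer_succ]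
    ring
  · intro j
    simp only [toRight, saalschutzTerm, qPochhammer_succ, qBinom_zero_left]
    ring
  · intro i
    simp only [toLeft, saalschutzTerm, qPochhammer_zero, qBinom_zero_right]
    ring
  · intro i j
    have shift : qPochhammer (a * b * d * q ^ i) q (j + 1) =
        (1 - a * b * d * q ^ i) * qPochhammer (a * b * d * q ^ (i + 1)) q j := by
      rw [qPochhammer_succ_left, pow_succ, mul_assoc _ (q ^ i)]
    simp only [toRight, toLeft, saalschutzTerm, shift, qPochhammer_succ (a * b * d * q ^ (i + 1))]
    linear_combination qPochhammer a q (i + 1) * qPochhammer b q (i + 1) * d ^ (i + 1) *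
      qPochhammer d q (j + 1) * qPochhammer (a * b * d * q ^ (i + 1)) q j *
        qBinom_succ_succ_mul_one_sub q (a * b * d) i j

theorem sum_antidiagonal_saalschutzTerm (q a b d : R) (n : ℕ) :
    ∑ p ∈ antidiagonal n, saalschutzTerm q a b d p.1 p.2 =
      qPochhammer (a * d) q n * qPochhammer (b * d) q n := by
  induction n with
  | zero => simp [saalschutzTerm]
  | succ n ih =>
    rw [sum_antidiagonal_succ_saalschutzTerm, ih, qPochhammer_succ, qPochhammer_succ]
    ring

end CommRing

section Field

variable {K : Type*} [Field K]

lemma qPochhammer_eq_mul_qPochhammer_inv {x q : K} (hx : x ≠ 0) (hq : q ≠ 0) (n : ℕ) :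
    qPochhammer x q n =
      (-x) ^ n * q ^ (∑ k ∈ range n, k) * qPochhammer (x⁻¹ * q ^ (1 - (n : ℤ))) q n := by
  have reverse : qPochhammer (x⁻¹ * q ^ (1 - (n : ℤ))) q n =
      ∏ k ∈ range n, (1 - x⁻¹ * (q ^ k)⁻¹) := by
    rw [qPochhammer, ← prod_range_reflect]
    refine prod_congr rfl fun k hk ↦ ?_
    have hkn : 1 - (n : ℤ) + (n - 1 - k : ℕ) = -k := by grind
    rw [mul_assoc, ← zpow_natCast, ← zpow_add₀ hq, hkn, zpow_neg, zpow_natCast]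
  have prefactor : (-x) ^ n * q ^ (∑ k ∈ range n, k) = ∏ k ∈ range n, (-x * q ^ k) := by
    rw [prod_mul_distrib, prod_const, card_range, prod_pow_eq_pow_sum]
  rw [reverse, prefactor, ← prod_mul_distrib, qPochhammer]
  refine prod_congr rfl fun k _ ↦ ?_
  field_simp
  ring

lemma qPochhammer_add_eq_mul_qPochhammer_inv {x q : K} (hx : x ≠ 0) (hq : q ≠ 0) (i j : ℕ) :
    qPochhammer x q (i + j) = qPochhammer x q j * ((-(x * q ^ j)) ^ i * q ^ (∑ k ∈ range i, k) *
      qPochhammer (x⁻¹ * q ^ (1 - ((i + j : ℕ) : ℤ))) q i) := by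
  have hbase : (x * q ^ j)⁻¹ * q ^ (1 - (i : ℤ)) = x⁻¹ * q ^ (1 - ((i + j : ℕ) : ℤ)) := by
    rw [mul_inv, mul_assoc, ← zpow_natCast, ← zpow_neg, ← zpow_add₀ hq]
    congr 2
    push_cast
    ring
  rw [add_comm i j, qPochhammer_add,
    qPochhammer_eq_mul_qPochhammer_inv (mul_ne_zero hx (pow_ne_zero j hq)) hq, hbase, add_comm j i]

lemma qPochhammer_zpow_neg_mul_qPochhammer_add {d q : K} (hd : d ≠ 0) (hq : q ≠ 0) (i j : ℕ) :
    qPochhammer (q ^ (-((i + j : ℕ) : ℤ))) q i * q ^ i * qPochhammer q q j *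
        qPochhammer d q (i + j) =
      qPochhammer q q (i + j) * qPochhammer d q j * d ^ i *
        qPochhammer (d⁻¹ * q ^ (1 - ((i + j : ℕ) : ℤ))) q i := by
  have hbase : q⁻¹ * q ^ (1 - ((i + j : ℕ) : ℤ)) = q ^ (-((i + j : ℕ) : ℤ)) := by
    rw [← zpow_neg_one, ← zpow_add₀ hq, ← add_sub_assoc, neg_add_cancel, zero_sub]
  rw [← hbase, qPochhammer_add_eq_mul_qPochhammer_inv hq hq,
    qPochhammer_add_eq_mul_qPochhammer_inv hd hq]
  simp only [neg_pow (_ * _), mul_pow]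
  ring

lemma saalschutzTerm_div {q a b d : K} (hq : q ≠ 0) (hd : d ≠ 0) {i j : ℕ}
    (hqn : qPochhammer q q (i + j) ≠ 0) (hcn : qPochhammer (a * b * d) q (i + j) ≠ 0)
    (hdn : qPochhammer d q (i + j) ≠ 0) :
    saalschutzTerm q a b d i j / (qPochhammer (a * b * d) q (i + j) * qPochhammer d q (i + j)) =
      qPochhammer a q i * qPochhammer b q i * qPochhammer (q ^ (-((i + j : ℕ) : ℤ))) q i /
        (qPochhammer q q i * qPochhammer (a * b * d) q i *
          qPochhammer (d⁻¹ * q ^ (1 - ((i + j : ℕ) : ℤ))) q i) * q ^ i := by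
  have hri : qPochhammer (d⁻¹ * q ^ (1 - ((i + j : ℕ) : ℤ))) q i ≠ 0 := by
    rw [qPochhammer_add_eq_mul_qPochhammer_inv hd hq] at hdn
    exact right_ne_zero_of_mul (right_ne_zero_of_mul hdn)
  have hkey := qPochhammer_zpow_neg_mul_qPochhammer_add hd hq i j
  rw [← qBinom_mul_qPochhammer] at hkey hqn
  have hqi : qPochhammer q q i ≠ 0 := left_ne_zero_of_mul (right_ne_zero_of_mul hqn)
  have hqj : qPochhammer q q j ≠ 0 := right_ne_zero_of_mul (right_ne_zero_of_mul hqn)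
  rw [qPochhammer_add (a * b * d)] at hcn ⊢
  have hci : qPochhammer (a * b * d) q i ≠ 0 := left_ne_zero_of_mul hcn
  rw [saalschutzTerm, div_mul_eq_mul_div,
    div_eq_div_iff (mul_ne_zero hcn hdn) (mul_ne_zero (mul_ne_zero hqi hci) hri)]
  refine mul_left_cancel₀ hqj ?_
  linear_combination -(qPochhammer a q i * qPochhammer b q i * qPochhammer (a * b * d) q i *
    qPochhammer (a * b * d * q ^ i) q j) * hkey

theorem q_pfaff_saalschutz_general {q a b c : K} {n : ℕ}
    (hq : q ≠ 0) (ha : a ≠ 0) (hb : b ≠ 0) (hc : c ≠ 0)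
    (hqn : qPochhammer q q n ≠ 0) (hcn : qPochhammer c q n ≠ 0)
    (hdn : qPochhammer (c / (a * b)) q n ≠ 0) :
    ∑ k ∈ range (n + 1),
        qPochhammer a q k * qPochhammer b q k * qPochhammer (q ^ (-(n : ℤ))) q k /
            (qPochhammer q q k * qPochhammer c q k *
              qPochhammer (a * b * c⁻¹ * q ^ (1 - (n : ℤ))) q k) *
          q ^ k =
      qPochhammer (c / a) q n * qPochhammer (c / b) q n /
        (qPochhammer c q n * qPochhammer (c / (a * b)) q n) := by
  obtain ⟨d, rfl⟩ : ∃ d, c = a * b * d := ⟨c / (a * b), by field_simp⟩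
  have hd : d ≠ 0 := right_ne_zero_of_mul hc
  have hcab : a * b * d / (a * b) = d := by field_simp
  have hca : a * b * d / a = b * d := by field_simp
  have hcb : a * b * d / b = a * d := by field_simp
  have habc : a * b * (a * b * d)⁻¹ = d⁻¹ := by field_simp
  rw [hcab] at hdn
  rw [hcab, hca, hcb, habc, mul_comm (qPochhammer (b * d) q n), ← sum_antidiagonal_saalschutzTerm,
    sum_div, Nat.sum_antidiagonal_eq_sum_range_succ_mk]
  refine sum_congr rfl fun k hk ↦ ?_
  obtain ⟨j, rfl⟩ := Nat.exists_eq_add_of_le (mem_range_succ_iff.mp hk)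
  rw [Nat.add_sub_cancel_left, saalschutzTerm_div hq hd hqn hcn hdn]

end Field

end

/-- The q-Pfaff–Saalschütz summation formula for a terminating balanced ₃φ₂ series:
`∑_{k=0}^n ((a;q)_k (b;q)_k (q^{-n};q)_k/((q;q)_k (c;q)_k (abc⁻¹q^{1-n};q)_k)) q^k
  = ((c/a;q)_n (c/b;q)_n)/((c;q)_n (c/(ab);q)_n)`,
assuming nonzero denominator factors. -/
theorem q_pfaff_saalschutz (q a b c : ℂ) (n : ℕ)
    (hq : q ≠ 0) (ha : a ≠ 0) (hb : b ≠ 0) (hc : c ≠ 0)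
    (hden : ∀ k ≤ n, qPoch q q k ≠ 0 ∧ qPoch c q k ≠ 0 ∧
      qPoch (a * b * c⁻¹ * q ^ (1 - (n : ℤ))) q k ≠ 0)
    (hden' : qPoch (c / (a * b)) q n ≠ 0) :
    ∑ k ∈ Finset.range (n + 1),
        qPoch a q k * qPoch b q k * qPoch (q ^ (-(n : ℤ))) q k /
            (qPoch q q k * qPoch c q k * qPoch (a * b * c⁻¹ * q ^ (1 - (n : ℤ))) q k) *
          q ^ k =
      qPoch (c / a) q n * qPoch (c / b) q n / (qPoch c q n * qPoch (c / (a * b)) q n) := by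
  obtain ⟨hqn, hcn, -⟩ := hden n le_rfl
  exact q_pfaff_saalschutz_general hq ha hb hc hqn hcn hden'
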